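/- Let c < 0 with κ = −c, let x, y ∈ D_c^p with y ≠ x, let u ∈ ℝ^p, and define γ(t) = exp_x(tu) and ψ(t) = (1/2) d_H(γ(t), y)². Then ψ is twice differentiable at every t with γ(t) ≠ y, and ψ''(t) ≤ g_c(d_H(γ(t),y)) · ‖u‖_{g,x}², where g_c(s) = √κ·s·coth(√κ·s) for s > 0 (and g_c(0) = 1) and ‖u‖_{g,x} = (2/(1 − κ‖x‖²))‖u‖. -/

import Mathlib

open scoped BigOperators InnerProductSpace RealInnerProductSpace
open Filter MeasureTheory
open scoped ProbabilityTheory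
attribute [local instance] Classical.propDecidable

noncomputable section

/-- Inverse hyperbolic tangent. -/
def artanh (x : ℝ) : ℝ := (1 / 2) * Real.log ((1 + x) / (1 - x))

/-- Inverse hyperbolic cosine. -/
def arcosh (x : ℝ) : ℝ := Real.log (x + Real.sqrt (x ^ 2 - 1))

/-- The Poincaré ball of curvature `c < 0` in dimension `p`. -/
def Dball (c : ℝ) (p : ℕ) : Set (EuclideanSpace ℝ (Fin p)) :=
  {v | -c * ‖v‖ ^ 2 < 1}

/-- Möbius (gyrovector) addition with curvature parameter `c`. -/
def mobiusAdd (c : ℝ) {p : ℕ} (v w : EuclideanSpace ℝ (Fin p)) :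
    EuclideanSpace ℝ (Fin p) :=
  (1 - 2 * c * ⟪v, w⟫_ℝ + c ^ 2 * ‖v‖ ^ 2 * ‖w‖ ^ 2)⁻¹ •
    ((1 - 2 * c * ⟪v, w⟫_ℝ - c * ‖w‖ ^ 2) • v + (1 + c * ‖v‖ ^ 2) • w)

/-- Möbius scalar multiplication with curvature parameter `c`. -/
def mobiusSmul (c lam : ℝ) {p : ℕ} (v : EuclideanSpace ℝ (Fin p)) :
    EuclideanSpace ℝ (Fin p) :=
  if v = 0 then 0 else
    ((1 / Real.sqrt (-c)) * Real.tanh (lam * artanh (Real.sqrt (-c) * ‖v‖)) * ‖v‖⁻¹) • v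

/-- Hyperbolic (Poincaré ball) distance. -/
def dH (c : ℝ) {p : ℕ} (x y : EuclideanSpace ℝ (Fin p)) : ℝ :=
  (2 / Real.sqrt (-c)) * artanh (Real.sqrt (-c) * ‖mobiusAdd c (-x) y‖)

/-- Conformal factor `λ_x = 2 / (1 - κ‖x‖²)`, `κ = -c`. -/
def conf (c : ℝ) {p : ℕ} (x : EuclideanSpace ℝ (Fin p)) : ℝ :=
  2 / (1 - (-c) * ‖x‖ ^ 2)

/-- Riemannian exponential map of the Poincaré ball at `x`. -/
def expMap (c : ℝ) {p : ℕ} (x v : EuclideanSpace ℝ (Fin p)) :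
    EuclideanSpace ℝ (Fin p) :=
  if v = 0 then x else
    mobiusAdd c x
      ((Real.tanh (conf c x * Real.sqrt (-c) * ‖v‖ / 2) / (Real.sqrt (-c) * ‖v‖)) • v)

/-- Riemannian logarithmic map of the Poincaré ball at `x`. -/
def logMap (c : ℝ) {p : ℕ} (x y : EuclideanSpace ℝ (Fin p)) :
    EuclideanSpace ℝ (Fin p) :=
  if y = x then 0 else
    ((2 / conf c x) * (artanh (Real.sqrt (-c) * ‖mobiusAdd c (-x) y‖) / ‖mobiusAdd c (-x) y‖)) •
      mobiusAdd c (-x) y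

/-- The Möbius weighted mean `⊕_j (w_j ⊗_c x_j)` (iterated Möbius sum). -/
def mobiusMean (c : ℝ) {p N : ℕ} (w : Fin N → ℝ) (x : Fin N → EuclideanSpace ℝ (Fin p)) :
    EuclideanSpace ℝ (Fin p) :=
  (List.ofFn fun j => mobiusSmul c (w j) (x j)).foldl (mobiusAdd c) 0

/-- Geodesic convexity in the Poincaré ball. -/
def GeodesicConvex (c : ℝ) {p : ℕ} (U : Set (EuclideanSpace ℝ (Fin p))) : Prop :=
  ∀ x ∈ U, ∀ y ∈ U, ∀ t ∈ Set.Icc (0 : ℝ) 1, expMap c x (t • logMap c x y) ∈ U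

/-- The Riemannian gradient on the Poincaré ball. -/
def gradH (c : ℝ) {p : ℕ} (f : EuclideanSpace ℝ (Fin p) → ℝ) (x : EuclideanSpace ℝ (Fin p)) :
    EuclideanSpace ℝ (Fin p) :=
  ((1 - (-c) * ‖x‖ ^ 2) ^ 2 / 4) • gradient f x

/-- The hyperbolic volume measure on `ℝ^p` (density of the Poincaré metric). -/
def volH (c : ℝ) (p : ℕ) : Measure (EuclideanSpace ℝ (Fin p)) :=
  volume.withDensity fun y => ENNReal.ofReal ((2 / (1 - (-c) * ‖y‖ ^ 2)) ^ p)

/-- Gaussian kernel on the Poincaré ball. -/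
def kernelK (c σ : ℝ) {p : ℕ} (x y : EuclideanSpace ℝ (Fin p)) : ℝ :=
  Real.exp (-(dH c x y) ^ 2 / (2 * σ ^ 2))

/-- Normalized Gaussian mean-shift weights relative to data `xt` at query point `x`. -/
def msWeight (c σ : ℝ) {p N : ℕ} (xt : Fin N → EuclideanSpace ℝ (Fin p))
    (x : EuclideanSpace ℝ (Fin p)) (j : Fin N) : ℝ :=
  kernelK c σ x (xt j) / ∑ k, kernelK c σ x (xt k)

/-- One HypeGBMS (Möbius weighted mean) update. -/
def msUpdate (c σ : ℝ) {p N : ℕ} (xt : Fin N → EuclideanSpace ℝ (Fin p))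
    (x : EuclideanSpace ℝ (Fin p)) : EuclideanSpace ℝ (Fin p) :=
  mobiusMean c (msWeight c σ xt x) xt

/-- Kernel density estimate `f̂` based on the fixed data `xt`. -/
def kdeFin (c σ : ℝ) {p N : ℕ} (xt : Fin N → EuclideanSpace ℝ (Fin p))
    (x : EuclideanSpace ℝ (Fin p)) : ℝ :=
  (1 / (N : ℝ)) * ∑ j, kernelK c σ x (xt j)

/-- Population smoothed density `f_σ`. -/
def popSmooth (c σ : ℝ) {p : ℕ} (f : EuclideanSpace ℝ (Fin p) → ℝ)
    (x : EuclideanSpace ℝ (Fin p)) : ℝ :=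
  ∫ y, kernelK c σ x y * f y ∂(volH c p)

/-- Empirical kernel density estimate from random samples `X`. -/
def empKDE (c σ : ℝ) {p : ℕ} {Ω : Type*} (X : ℕ → Ω → EuclideanSpace ℝ (Fin p))
    (N : ℕ) (ω : Ω) (x : EuclideanSpace ℝ (Fin p)) : ℝ :=
  (1 / (N : ℝ)) * ∑ i ∈ Finset.range N, kernelK c σ x (X i ω)

/-- Set of (Euclidean) critical points of `g` inside `U`. -/
def critSet {p : ℕ} (g : EuclideanSpace ℝ (Fin p) → ℝ)
    (U : Set (EuclideanSpace ℝ (Fin p))) : Set (EuclideanSpace ℝ (Fin p)) :=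
  {x ∈ U | gradient g x = 0}

/-- Hausdorff distance between two subsets of the Poincaré ball w.r.t. `dH`. -/
def hausdH (c : ℝ) {p : ℕ} (A B : Set (EuclideanSpace ℝ (Fin p))) : ℝ :=
  max (⨆ a ∈ A, ⨅ b ∈ B, dH c a b) (⨆ b ∈ B, ⨅ a ∈ A, dH c a b)

/-- The comparison function `g_c(s) = √κ s coth(√κ s)`, with `g_c(0) = 1`. -/
def gcomp (c : ℝ) (s : ℝ) : ℝ :=
  if s = 0 then 1
  else Real.sqrt (-c) * s * (Real.cosh (Real.sqrt (-c) * s) / Real.sinh (Real.sqrt (-c) * s))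

open scoped Topology

/-!
Write `κ = -c` and `d(s) = d_H(γ(s), y)`. The hyperbolic law of cosines shows that `cosh (√κ d)`
is a linear combination of `cosh (√κ v s)` and `sinh (√κ v s)`, where `v = ‖u‖_{g,x}`, so that
`(cosh (√κ d))'' = κ v² cosh (√κ d)`. Expanding the left-hand side gives
`d'' = √κ coth (√κ d) (v² - d'²)`, hence
`(½ d²)'' = g_c(d) v² + (1 - g_c(d)) d'²`, and `g_c ≥ 1` because `sinh r ≤ r cosh r`.
-/

section HyperbolicFunctions

lemma sinh_le_self_mul_cosh {r : ℝ} (hr : 0 ≤ r) : Real.sinh r ≤ r * Real.cosh r := by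
  have cosh_le : ∀ s ∈ interior (Set.Icc 0 r), deriv Real.sinh s ≤ Real.cosh r := by
    intro s hs
    obtain ⟨hs0, hsr⟩ := interior_subset hs
    rw [Real.deriv_sinh, Real.cosh_le_cosh, abs_of_nonneg hs0, abs_of_nonneg hr]
    exact hsr
  have := (convex_Icc 0 r).image_sub_le_mul_sub_of_deriv_le Real.continuous_sinh.continuousOn
    Real.differentiable_sinh.differentiableOn cosh_le 0 (Set.left_mem_Icc.2 hr) r
    (Set.right_mem_Icc.2 hr) hr
  simpa [mul_comm] using this

lemma one_le_self_mul_coth {r : ℝ} (hr : 0 < r) : 1 ≤ r * (Real.cosh r / Real.sinh r) := by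
  rw [mul_div_assoc', one_le_div (Real.sinh_pos_iff.2 hr)]
  exact sinh_le_self_mul_cosh hr.le

lemma one_sub_tanh_sq (θ : ℝ) : 1 - Real.tanh θ ^ 2 = (Real.cosh θ ^ 2)⁻¹ := by
  have := (Real.cosh_pos θ).ne'
  rw [Real.tanh_eq_sinh_div_cosh]
  field_simp
  linarith [Real.cosh_sq θ]

lemma one_sub_tanh_sq_pos (θ : ℝ) : 0 < 1 - Real.tanh θ ^ 2 := by
  rw [one_sub_tanh_sq]
  exact inv_pos.2 (pow_pos (Real.cosh_pos θ) 2)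

lemma cosh_two_mul_eq_tanh (θ : ℝ) :
    Real.cosh (2 * θ) = (1 + Real.tanh θ ^ 2) / (1 - Real.tanh θ ^ 2) := by
  have := (Real.cosh_pos θ).ne'
  rw [one_sub_tanh_sq, Real.cosh_two_mul, Real.tanh_eq_sinh_div_cosh]
  field_simp

lemma sinh_two_mul_eq_tanh (θ : ℝ) :
    Real.sinh (2 * θ) = 2 * Real.tanh θ / (1 - Real.tanh θ ^ 2) := by
  have := (Real.cosh_pos θ).ne'
  rw [one_sub_tanh_sq, Real.sinh_two_mul, Real.tanh_eq_sinh_div_cosh]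
  field_simp

lemma artanh_eq_real_artanh {r : ℝ} (hr : r ∈ Set.Icc (-1) 1) : artanh r = Real.artanh r :=
  (Real.artanh_eq_half_log hr).symm

lemma cosh_two_mul_artanh {r : ℝ} (hr : r ∈ Set.Ioo (-1) 1) :
    Real.cosh (2 * artanh r) = (1 + r ^ 2) / (1 - r ^ 2) := by
  rw [artanh_eq_real_artanh (Set.Ioo_subset_Icc_self hr), cosh_two_mul_eq_tanh,
    Real.tanh_artanh hr]

end HyperbolicFunctions

section ImplicitDifferentiation

variable {d C' : ℝ → ℝ} {t : ℝ}

lemma hasDerivAt_of_cosh {f : ℝ → ℝ} {f' : ℝ} (hf : ∀ᶠ s in 𝓝 t, 0 ≤ f s) (hft : 0 < f t)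
    (h : HasDerivAt (fun s ↦ Real.cosh (f s)) f' t) :
    HasDerivAt f (f' / Real.sinh (f t)) t := by
  have one_lt : 1 < Real.cosh (f t) := Real.one_lt_cosh.2 hft.ne'
  have arcosh_comp := (Real.hasDerivAt_arcosh one_lt).comp t h
  rw [← Real.sinh_arcosh one_lt.le, Real.arcosh_cosh hft.le, inv_mul_eq_div] at arcosh_comp
  exact arcosh_comp.congr_of_eventuallyEq (hf.mono fun s hs ↦ (Real.arcosh_cosh hs).symm)

lemma hasDerivAt_of_cosh_mul {k C't : ℝ} (hk : 0 < k) (hd : ∀ᶠ s in 𝓝 t, 0 ≤ d s)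
    (hdt : 0 < d t) (h : HasDerivAt (fun s ↦ Real.cosh (k * d s)) C't t) :
    HasDerivAt d (C't / (k * Real.sinh (k * d t))) t := by
  have hkd := (hasDerivAt_of_cosh (hd.mono fun s hs ↦ mul_nonneg hk.le hs) (mul_pos hk hdt)
    h).const_mul k⁻¹
  simp only [inv_mul_cancel_left₀ hk.ne'] at hkd
  exact hkd.congr_deriv (by field_simp)

lemma eventually_hasDerivAt_of_cosh_mul {k : ℝ} (hk : 0 < k) (hd : ∀ᶠ s in 𝓝 t, 0 ≤ d s)
    (hdt : 0 < d t) (hC : ∀ᶠ s in 𝓝 t, HasDerivAt (fun s ↦ Real.cosh (k * d s)) (C' s) s) :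
    ∀ᶠ s in 𝓝 t, HasDerivAt d (C' s / (k * Real.sinh (k * d s))) s := by
  have d_pos : ∀ᶠ s in 𝓝 t, 0 < d s :=
    (hasDerivAt_of_cosh_mul hk hd hdt hC.self_of_nhds).continuousAt.eventually_const_lt hdt
  filter_upwards [hC, hd.eventually_nhds, d_pos] with s hCs hds hdspos
  exact hasDerivAt_of_cosh_mul hk hds hdspos hCs

lemma hasDerivAt_div_sinh_of_cosh_mul {k v d't : ℝ} (hk : 0 < k) (hdt : 0 < d t)
    (hd' : HasDerivAt d d't t) (hC : HasDerivAt (fun s ↦ Real.cosh (k * d s)) (C' t) t)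
    (hC' : HasDerivAt C' ((k * v) ^ 2 * Real.cosh (k * d t)) t) :
    HasDerivAt (fun s ↦ C' s / (k * Real.sinh (k * d s)))
      (k * (Real.cosh (k * d t) / Real.sinh (k * d t)) * (v ^ 2 - d't ^ 2)) t := by
  have sinh_pos : 0 < Real.sinh (k * d t) := Real.sinh_pos_iff.2 (mul_pos hk hdt)
  have C'_eq : C' t = Real.sinh (k * d t) * (k * d't) := hC.unique (hd'.const_mul k).cosh
  refine (hC'.div ((hd'.const_mul k).sinh.const_mul k) (mul_pos hk sinh_pos).ne').congr_deriv ?_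
  rw [C'_eq]
  field_simp

lemma hasDerivAt_half_sq {d't : ℝ} (h : HasDerivAt d d't t) :
    HasDerivAt (fun s ↦ 1 / 2 * d s ^ 2) (d t * d't) t :=
  ((h.pow 2).const_mul (1 / 2)).congr_deriv (by simp; ring)

lemma hasDerivAt_deriv_half_sq {d' : ℝ → ℝ} {d'' : ℝ} (hd : ∀ᶠ s in 𝓝 t, HasDerivAt d (d' s) s)
    (hd' : HasDerivAt d' d'' t) :
    HasDerivAt (deriv fun s ↦ 1 / 2 * d s ^ 2) (d' t ^ 2 + d t * d'') t :=
  ((hd.self_of_nhds.mul hd').congr_deriv (by ring)).congr_of_eventuallyEq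
    (hd.mono fun _ hs ↦ (hasDerivAt_half_sq hs).deriv)

theorem deriv_deriv_half_sq_le_of_cosh_mul {k v : ℝ} (hk : 0 < k) (hd : ∀ᶠ s in 𝓝 t, 0 ≤ d s)
    (hdt : 0 < d t) (hC : ∀ᶠ s in 𝓝 t, HasDerivAt (fun s ↦ Real.cosh (k * d s)) (C' s) s)
    (hC' : HasDerivAt C' ((k * v) ^ 2 * Real.cosh (k * d t)) t) :
    DifferentiableAt ℝ (fun s ↦ 1 / 2 * d s ^ 2) t ∧
      DifferentiableAt ℝ (deriv fun s ↦ 1 / 2 * d s ^ 2) t ∧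
      deriv (deriv fun s ↦ 1 / 2 * d s ^ 2) t ≤
        k * d t * (Real.cosh (k * d t) / Real.sinh (k * d t)) * v ^ 2 := by
  have d_deriv := eventually_hasDerivAt_of_cosh_mul hk hd hdt hC
  have second_deriv := hasDerivAt_deriv_half_sq d_deriv
    (hasDerivAt_div_sinh_of_cosh_mul hk hdt d_deriv.self_of_nhds hC.self_of_nhds hC')
  refine ⟨(hasDerivAt_half_sq d_deriv.self_of_nhds).differentiableAt,
    second_deriv.differentiableAt, ?_⟩
  rw [second_deriv.deriv]
  have one_le := one_le_self_mul_coth (mul_pos hk hdt)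
  linear_combination (C' t / (k * Real.sinh (k * d t))) ^ 2 * one_le

lemma hasDerivAt_cosh_add_sinh (A B ω s : ℝ) :
    HasDerivAt (fun s ↦ A * Real.cosh (ω * s) + B * Real.sinh (ω * s))
      (ω * B * Real.cosh (ω * s) + ω * A * Real.sinh (ω * s)) s := by
  have hω : HasDerivAt (fun s ↦ ω * s) ω s := by simpa using (hasDerivAt_id s).const_mul ω
  exact ((hω.cosh.const_mul A).add (hω.sinh.const_mul B)).congr_deriv (by ring)

end ImplicitDifferentiation

section PoincareBall

variable {c : ℝ} {p : ℕ} {v w x y e : EuclideanSpace ℝ (Fin p)}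

lemma mem_Dball_iff : v ∈ Dball c p ↔ 0 < 1 + c * ‖v‖ ^ 2 := by
  change -c * ‖v‖ ^ 2 < 1 ↔ _
  constructor <;> intro h <;> linarith

lemma neg_mem_Dball : -v ∈ Dball c p ↔ v ∈ Dball c p := by
  simp only [mem_Dball_iff, norm_neg]

lemma conf_eq (c : ℝ) (v : EuclideanSpace ℝ (Fin p)) : conf c v = 2 / (1 + c * ‖v‖ ^ 2) := by
  rw [conf, neg_mul, sub_neg_eq_add]

lemma conf_neg (c : ℝ) (v : EuclideanSpace ℝ (Fin p)) : conf c (-v) = conf c v := by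
  simp only [conf_eq, norm_neg]

lemma conf_pos (hv : v ∈ Dball c p) : 0 < conf c v := by
  rw [conf_eq]
  exact div_pos two_pos (mem_Dball_iff.1 hv)

lemma mobiusAdd_denom_pos (hc : c < 0) (hv : v ∈ Dball c p) (hw : w ∈ Dball c p) :
    0 < 1 - 2 * c * ⟪v, w⟫_ℝ + c ^ 2 * ‖v‖ ^ 2 * ‖w‖ ^ 2 := by
  rw [mem_Dball_iff] at hv hw
  have norm_mul_norm_lt : 0 < 1 + c * (‖v‖ * ‖w‖) := by nlinarith [sq_nonneg (‖v‖ - ‖w‖)]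
  have cauchy_schwarz : -(‖v‖ * ‖w‖) ≤ ⟪v, w⟫_ℝ := (abs_le.1 (abs_real_inner_le_norm v w)).1
  calc 0 < (1 + c * (‖v‖ * ‖w‖)) ^ 2 := by positivity
    _ ≤ _ := by nlinarith

lemma one_add_mul_norm_mobiusAdd_sq
    (h : 1 - 2 * c * ⟪v, w⟫_ℝ + c ^ 2 * ‖v‖ ^ 2 * ‖w‖ ^ 2 ≠ 0) :
    1 + c * ‖mobiusAdd c v w‖ ^ 2 = (1 + c * ‖v‖ ^ 2) * (1 + c * ‖w‖ ^ 2) /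
      (1 - 2 * c * ⟪v, w⟫_ℝ + c ^ 2 * ‖v‖ ^ 2 * ‖w‖ ^ 2) := by
  have norm_sq : ‖mobiusAdd c v w‖ ^ 2 = (‖v‖ ^ 2 + 2 * ⟪v, w⟫_ℝ + ‖w‖ ^ 2) /
      (1 - 2 * c * ⟪v, w⟫_ℝ + c ^ 2 * ‖v‖ ^ 2 * ‖w‖ ^ 2) := by
    rw [mobiusAdd, norm_smul, mul_pow, norm_add_sq_real, norm_smul, norm_smul, mul_pow, mul_pow,
      real_inner_smul_left, real_inner_smul_right]
    simp only [Real.norm_eq_abs, sq_abs]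
    field_simp
    ring
  rw [norm_sq, eq_div_iff h, add_mul, mul_assoc c, div_mul_cancel₀ _ h]
  ring

lemma mobiusAdd_mem_Dball (hc : c < 0) (hv : v ∈ Dball c p) (hw : w ∈ Dball c p) :
    mobiusAdd c v w ∈ Dball c p := by
  have denom_pos := mobiusAdd_denom_pos hc hv hw
  rw [mem_Dball_iff] at hv hw ⊢
  rw [one_add_mul_norm_mobiusAdd_sq denom_pos.ne']
  positivity

lemma conf_mobiusAdd (hc : c < 0) (hv : v ∈ Dball c p) (hw : w ∈ Dball c p) :
    conf c (mobiusAdd c v w) = conf c v * conf c w / 2 *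
      (1 - 2 * c * ⟪v, w⟫_ℝ + c ^ 2 * ‖v‖ ^ 2 * ‖w‖ ^ 2) := by
  have denom_ne := (mobiusAdd_denom_pos hc hv hw).ne'
  rw [mem_Dball_iff] at hv hw
  rw [conf_eq, conf_eq, conf_eq, one_add_mul_norm_mobiusAdd_sq denom_ne]
  field_simp

lemma conf_smul_mobiusAdd (hc : c < 0) (hv : v ∈ Dball c p) (hw : w ∈ Dball c p) :
    conf c (mobiusAdd c v w) • mobiusAdd c v w = (conf c v * conf c w / 2) •
      ((1 - 2 * c * ⟪v, w⟫_ℝ - c * ‖w‖ ^ 2) • v + (1 + c * ‖v‖ ^ 2) • w) := by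
  rw [conf_mobiusAdd hc hv hw, mobiusAdd, smul_smul, mul_assoc,
    mul_inv_cancel₀ (mobiusAdd_denom_pos hc hv hw).ne', mul_one]

lemma sqrt_mul_norm_mem_Ico (hc : c < 0) (hv : v ∈ Dball c p) :
    √(-c) * ‖v‖ ∈ Set.Ico (0 : ℝ) 1 := by
  refine ⟨by positivity, ?_⟩
  rw [← sq_lt_one_iff₀ (by positivity), mul_pow, Real.sq_sqrt (neg_nonneg.2 hc.le)]
  exact hv

lemma dH_nonneg (hc : c < 0) (hx : x ∈ Dball c p) (hy : y ∈ Dball c p) : 0 ≤ dH c x y := by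
  have hr := sqrt_mul_norm_mem_Ico hc (mobiusAdd_mem_Dball hc (neg_mem_Dball.2 hx) hy)
  rw [dH, artanh_eq_real_artanh ⟨by linarith [hr.1], hr.2.le⟩]
  have := Real.artanh_nonneg hr.1
  positivity

lemma cosh_two_mul_artanh_sqrt_mul_norm (hc : c < 0) (hv : v ∈ Dball c p) :
    Real.cosh (2 * artanh (√(-c) * ‖v‖)) = conf c v - 1 := by
  have hr := sqrt_mul_norm_mem_Ico hc hv
  rw [cosh_two_mul_artanh ⟨by linarith [hr.1], hr.2⟩, mul_pow, Real.sq_sqrt (neg_nonneg.2 hc.le),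
    conf, eq_sub_iff_add_eq, div_add_one (sub_pos.2 hv).ne']
  ring

/- In the hyperboloid model `x` has time coordinate `conf c x - 1` and space coordinate
`√(-c) • conf c x • x`, so the right-hand side is minus the Lorentz product of `x` and `y`. -/
lemma cosh_sqrt_mul_dH (hc : c < 0) (hx : x ∈ Dball c p) (hy : y ∈ Dball c p) :
    Real.cosh (√(-c) * dH c x y) =
      (conf c x - 1) * (conf c y - 1) + c * ⟪conf c x • x, conf c y • y⟫_ℝ := by
  have hx' := neg_mem_Dball.2 hx
  have sqrt_ne : √(-c) ≠ 0 := (Real.sqrt_pos.2 (neg_pos.2 hc)).ne'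
  have artanh_eq : √(-c) * dH c x y = 2 * artanh (√(-c) * ‖mobiusAdd c (-x) y‖) := by
    rw [dH]; field_simp
  rw [artanh_eq, cosh_two_mul_artanh_sqrt_mul_norm hc (mobiusAdd_mem_Dball hc hx' hy),
    conf_mobiusAdd hc hx' hy, conf_neg, norm_neg, inner_neg_left, real_inner_smul_left,
    real_inner_smul_right, conf_eq, conf_eq]
  rw [mem_Dball_iff] at hx hy
  field_simp
  ring

lemma cosh_sqrt_mul_dH_eq_one_add (hc : c < 0) (hx : x ∈ Dball c p) (hy : y ∈ Dball c p) :
    Real.cosh (√(-c) * dH c x y) = 1 + -c / 2 * conf c x * conf c y * ‖x - y‖ ^ 2 := by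
  rw [cosh_sqrt_mul_dH hc hx hy, real_inner_smul_left, real_inner_smul_right, norm_sub_sq_real,
    conf_eq, conf_eq]
  rw [mem_Dball_iff] at hx hy
  field_simp
  ring

lemma dH_pos (hc : c < 0) (hx : x ∈ Dball c p) (hy : y ∈ Dball c p) (hxy : x ≠ y) :
    0 < dH c x y := by
  refine (dH_nonneg hc hx hy).lt_of_ne' fun h ↦ ?_
  have excess_pos : 0 < -c / 2 * conf c x * conf c y * ‖x - y‖ ^ 2 := by
    have := neg_pos.2 hc
    have := conf_pos hx
    have := conf_pos hy
    have := norm_pos_iff.2 (sub_ne_zero.2 hxy)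
    positivity
  have cosh_eq := cosh_sqrt_mul_dH_eq_one_add hc hx hy
  rw [h, mul_zero, Real.cosh_zero] at cosh_eq
  linarith

lemma mul_norm_tanh_smul_sq (he : c * ‖e‖ ^ 2 = -1) (θ : ℝ) :
    c * ‖Real.tanh θ • e‖ ^ 2 = -Real.tanh θ ^ 2 := by
  rw [norm_smul, mul_pow, Real.norm_eq_abs, sq_abs]
  linear_combination Real.tanh θ ^ 2 * he

lemma tanh_smul_mem_Dball (he : c * ‖e‖ ^ 2 = -1) (θ : ℝ) : Real.tanh θ • e ∈ Dball c p := by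
  rw [mem_Dball_iff, mul_norm_tanh_smul_sq he, ← sub_eq_add_neg]
  exact one_sub_tanh_sq_pos θ

lemma conf_tanh_smul (he : c * ‖e‖ ^ 2 = -1) (θ : ℝ) :
    conf c (Real.tanh θ • e) = 2 / (1 - Real.tanh θ ^ 2) := by
  rw [conf_eq, mul_norm_tanh_smul_sq he, ← sub_eq_add_neg]

lemma conf_mobiusAdd_tanh_smul (hc : c < 0) (hx : x ∈ Dball c p) (he : c * ‖e‖ ^ 2 = -1)
    (θ : ℝ) :
    conf c (mobiusAdd c x (Real.tanh θ • e)) - 1 = (conf c x - 1) * Real.cosh (2 * θ) -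
      c * conf c x * ⟪x, e⟫_ℝ * Real.sinh (2 * θ) := by
  have denom_eq : c ^ 2 * ‖x‖ ^ 2 * ‖Real.tanh θ • e‖ ^ 2 = -(c * ‖x‖ ^ 2 * Real.tanh θ ^ 2) := by
    linear_combination c * ‖x‖ ^ 2 * mul_norm_tanh_smul_sq he θ
  rw [conf_mobiusAdd hc hx (tanh_smul_mem_Dball he θ), denom_eq, conf_tanh_smul he,
    real_inner_smul_right, cosh_two_mul_eq_tanh, sinh_two_mul_eq_tanh, conf_eq]
  rw [mem_Dball_iff] at hx
  have := (one_sub_tanh_sq_pos θ).ne'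
  field_simp
  ring

lemma conf_smul_mobiusAdd_tanh_smul (hc : c < 0) (hx : x ∈ Dball c p) (he : c * ‖e‖ ^ 2 = -1)
    (θ : ℝ) :
    conf c (mobiusAdd c x (Real.tanh θ • e)) • mobiusAdd c x (Real.tanh θ • e) =
      Real.cosh (2 * θ) • conf c x • x +
        Real.sinh (2 * θ) • (e - (c * ⟪x, e⟫_ℝ) • conf c x • x) := by
  rw [conf_smul_mobiusAdd hc hx (tanh_smul_mem_Dball he θ), mul_norm_tanh_smul_sq he,
    conf_tanh_smul he, real_inner_smul_right, cosh_two_mul_eq_tanh, sinh_two_mul_eq_tanh, conf_eq]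
  rw [mem_Dball_iff] at hx
  have := (one_sub_tanh_sq_pos θ).ne'
  match_scalars <;> field_simp
  ring

/- Since `tanh` is odd, the signs of `s` and `‖s • u‖ = |s| ‖u‖` cancel. For `u = 0` both sides
are `x`, with `(√(-c) * ‖u‖)⁻¹ = 0`. -/
lemma expMap_smul (c : ℝ) (x u : EuclideanSpace ℝ (Fin p)) (s : ℝ) :
    expMap c x (s • u) = mobiusAdd c x
      (Real.tanh (√(-c) * (conf c x * ‖u‖) * s / 2) • (√(-c) * ‖u‖)⁻¹ • u) := by
  unfold expMap
  split_ifs with h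
  · rcases smul_eq_zero.1 h with rfl | rfl <;> simp [mobiusAdd]
  · have hs : s ≠ 0 := (smul_ne_zero_iff.1 h).1
    rw [norm_smul, smul_smul, smul_smul, Real.norm_eq_abs]
    congr 2
    rcases hs.lt_or_gt with hs' | hs'
    · rw [abs_of_neg hs', show conf c x * √(-c) * (-s * ‖u‖) / 2 =
        -(√(-c) * (conf c x * ‖u‖) * s / 2) by ring, Real.tanh_neg]
      field_simp
    · rw [abs_of_pos hs', show conf c x * √(-c) * (s * ‖u‖) / 2 =
        √(-c) * (conf c x * ‖u‖) * s / 2 by ring]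
      field_simp

lemma mul_norm_inv_smul_sq (hc : c < 0) {u : EuclideanSpace ℝ (Fin p)} (hu : u ≠ 0) :
    c * ‖(√(-c) * ‖u‖)⁻¹ • u‖ ^ 2 = -1 := by
  have := norm_ne_zero_iff.2 hu
  rw [norm_smul, Real.norm_eq_abs, mul_pow, sq_abs, inv_pow, mul_pow,
    Real.sq_sqrt (neg_nonneg.2 hc.le)]
  have := hc.ne
  field_simp

lemma expMap_zero (c : ℝ) (x : EuclideanSpace ℝ (Fin p)) : expMap c x 0 = x := if_pos rfl

lemma expMap_mem_Dball (hc : c < 0) (hx : x ∈ Dball c p) (u : EuclideanSpace ℝ (Fin p)) :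
    expMap c x u ∈ Dball c p := by
  rcases eq_or_ne u 0 with rfl | hu
  · rwa [expMap_zero]
  · rw [← one_smul ℝ u, expMap_smul]
    exact mobiusAdd_mem_Dball hc hx (tanh_smul_mem_Dball (mul_norm_inv_smul_sq hc hu) _)

/- The hyperbolic law of cosines; `B` is `-sinh (√(-c) * dH c x y)` times the cosine of the angle
at `x`. -/
theorem exists_cosh_sqrt_mul_dH_expMap_smul (hc : c < 0) (hx : x ∈ Dball c p)
    (hy : y ∈ Dball c p) (u : EuclideanSpace ℝ (Fin p)) :
    ∃ B : ℝ, ∀ s : ℝ, Real.cosh (√(-c) * dH c (expMap c x (s • u)) y) =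
      Real.cosh (√(-c) * dH c x y) * Real.cosh (√(-c) * (conf c x * ‖u‖) * s) +
        B * Real.sinh (√(-c) * (conf c x * ‖u‖) * s) := by
  rcases eq_or_ne u 0 with rfl | hu
  · exact ⟨0, fun s ↦ by simp [expMap_zero]⟩
  set e := (√(-c) * ‖u‖)⁻¹ • u with e_def
  have he : c * ‖e‖ ^ 2 = -1 := mul_norm_inv_smul_sq hc hu
  refine ⟨-(c * conf c x * ⟪x, e⟫_ℝ) * (conf c y - 1) +
    c * ⟪e - (c * ⟪x, e⟫_ℝ) • conf c x • x, conf c y • y⟫_ℝ, fun s ↦ ?_⟩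
  rw [cosh_sqrt_mul_dH hc (expMap_mem_Dball hc hx _) hy, cosh_sqrt_mul_dH hc hx hy, expMap_smul,
    ← e_def, conf_mobiusAdd_tanh_smul hc hx he, conf_smul_mobiusAdd_tanh_smul hc hx he,
    mul_div_cancel₀ _ two_ne_zero, inner_add_left, real_inner_smul_left _ _ (Real.cosh _),
    real_inner_smul_left _ _ (Real.sinh _)]
  ring

lemma exists_hasDerivAt_cosh_sqrt_mul_dH_expMap_smul (hc : c < 0) (hx : x ∈ Dball c p)
    (hy : y ∈ Dball c p) (u : EuclideanSpace ℝ (Fin p)) :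
    ∃ C' : ℝ → ℝ, ∀ s : ℝ,
      HasDerivAt (fun s ↦ Real.cosh (√(-c) * dH c (expMap c x (s • u)) y)) (C' s) s ∧
      HasDerivAt C' ((√(-c) * (conf c x * ‖u‖)) ^ 2 *
        Real.cosh (√(-c) * dH c (expMap c x (s • u)) y)) s := by
  obtain ⟨B, law_of_cosines⟩ := exists_cosh_sqrt_mul_dH_expMap_smul hc hx hy u
  simp only [law_of_cosines]
  exact ⟨_, fun s ↦ ⟨hasDerivAt_cosh_add_sinh _ _ _ s,
    (hasDerivAt_cosh_add_sinh _ _ _ s).congr_deriv (by ring)⟩⟩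

end PoincareBall

/-- Hessian comparison along geodesics.  Fix `c < 0`, `x, y ∈ D_c^p`
with `y ≠ x`, and `u ∈ ℝ^p`; let `γ(t) = exp_x(tu)` and `ψ(t) = ½ d_H(γ(t), y)²`.  Then
at every `t` with `γ(t) ≠ y`, `ψ` is twice differentiable and
`ψ''(t) ≤ g_c(d_H(γ(t), y)) ‖u‖_{g,x}²`, where `g_c(s) = √κ s coth(√κ s)` (`g_c(0)=1`),
`κ = −c`, and `‖u‖_{g,x} = (2/(1 − κ‖x‖²))‖u‖`. -/
theorem squared_distance_second_derivative_bound
    (p : ℕ) (c : ℝ) (hc : c < 0)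
    (x y : EuclideanSpace ℝ (Fin p)) (hx : x ∈ Dball c p) (hy : y ∈ Dball c p)
    (hxy : y ≠ x) (u : EuclideanSpace ℝ (Fin p)) :
    ∀ t : ℝ, expMap c x (t • u) ≠ y →
      DifferentiableAt ℝ (fun s => (1 / 2) * dH c (expMap c x (s • u)) y ^ 2) t ∧
      DifferentiableAt ℝ
        (deriv (fun s => (1 / 2) * dH c (expMap c x (s • u)) y ^ 2)) t ∧
      deriv (deriv (fun s => (1 / 2) * dH c (expMap c x (s • u)) y ^ 2)) t ≤
        gcomp c (dH c (expMap c x (t • u)) y) * (conf c x * ‖u‖) ^ 2 := by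
  intro t hne
  obtain ⟨C', hC'⟩ := exists_hasDerivAt_cosh_sqrt_mul_dH_expMap_smul hc hx hy u
  have dist_nonneg (s : ℝ) : 0 ≤ dH c (expMap c x (s • u)) y :=
    dH_nonneg hc (expMap_mem_Dball hc hx _) hy
  have dist_pos : 0 < dH c (expMap c x (t • u)) y := dH_pos hc (expMap_mem_Dball hc hx _) hy hne
  rw [gcomp, if_neg dist_pos.ne']
  exact deriv_deriv_half_sq_le_of_cosh_mul (Real.sqrt_pos.2 (neg_pos.2 hc))
    (.of_forall dist_nonneg) dist_pos (.of_forall fun s ↦ (hC' s).1) (hC' t).2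
end
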